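/- Fix c_0 > 0, θ > 1 and a closed interval [H_1, H_2] ⊂ ℝ. For x ∈ ℝ and k ∈ ℕ write c_0 θ^k x = r_k(x) + ε_k(x) with r_k(x) ∈ ℤ and ε_k(x) ∈ (−1/2, 1/2]. For ε ∈ (0, 1/2) and N ∈ ℕ let Γ_N(ε) = {x ∈ [H_1, H_2] : #{1 ≤ k ≤ N : ‖c_0 θ^k x‖ < 1/(2(1+θ))} > (1−ε)N}. Then the number of distinct integers of the form r_N(x) with x ∈ Γ_N(ε) is at most (Σ_{j=0}^{⌊εN⌋+1} C(N, j)) · (θ+2)^{2εN} · (c_0 θ (H_2 − H_1) + 1), where C(N, j) denotes the binomial coefficient. -/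

import Mathlib

open Real

/-- The distance from a real number to its nearest integer. -/
noncomputable def distNearestInt (x : ℝ) : ℝ := |x - round x|

/-- The unique integer `r` such that `y = r + e` with `e ∈ (-1/2, 1/2]`. -/
noncomputable def nearInt (y : ℝ) : ℤ := ⌈y - 1 / 2⌉

/-
Write `c₀ θ ^ k x = r_k + ε_k`. Since `r_{k+1} - θ r_k = θ ε_k - ε_{k+1}`, the integer `r_{k+1}`
lies within `(θ + 1) / 2` of `θ r_k`, and within less than `1 / 2` of it when both `k` and `k + 1`
are good indices, i.e. `|ε_k|` and `|ε_{k+1}|` are below `1 / (2 (1 + θ))`. So `r_k` determines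
`r_{k+1}` across a step between good indices and leaves at most `θ + 2` choices across any other
step. A set of `m` indices meets at most `2 m` steps, and there are at most `L + 2` choices for
`r_1`, where `L = c₀ θ (H₂ - H₁)`. Enlarging each set of bad indices to one with exactly
`m = min ⌊ε N⌋ N` elements therefore gives the bound `C(N, m) (L + 2) (θ + 2) ^ (2 m)`.
Finally `L + 2 ≤ 2 (L + 1)`, and the factor `2` is absorbed by
`C(N, m) ≤ C(N, m - 1) + C(N, m + 1)`, which is where the last term of the binomial sum is spent.
-/

theorem card_Icc_ceil_floor_le (a b : ℝ) : (Finset.Icc ⌈a⌉ ⌊b⌋).card ≤ ⌊b - a⌋₊ + 1 := by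
  have hlen : ⌊b⌋ - ⌈a⌉ ≤ ⌊b - a⌋ := by
    rw [Int.le_floor]
    push_cast
    linarith [Int.floor_le b, Int.le_ceil a]
  rw [Int.card_Icc, ← Int.floor_toNat]
  omega

theorem two_mul_choose_le_sum_range {n : ℕ} (hn : n ≠ 0) (m : ℕ) :
    2 * n.choose m ≤ ∑ j ∈ Finset.range (m + 2), n.choose j := by
  obtain ⟨n, rfl⟩ := Nat.exists_eq_add_one_of_ne_zero hn
  cases m with
  | zero =>
    simp only [Finset.sum_range_succ, Finset.sum_range_zero, Nat.choose_zero_right,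
      Nat.choose_one_right]
    omega
  | succ m =>
    have hlower : n.choose m ≤ (n + 1).choose m := Nat.choose_le_succ n m
    have hupper : n.choose (m + 1) ≤ (n + 1).choose (m + 2) := by
      rw [Nat.choose_succ_succ]
      exact Nat.le_add_right _ _
    have hpascal : (n + 1).choose (m + 1) = n.choose m + n.choose (m + 1) :=
      Nat.choose_succ_succ n m
    simp only [Finset.sum_range_succ]
    omega

theorem finite_and_ncard_le_of_subset {α : Type*} {S : Set α} {F : Finset α} {M : ℝ}
    (hS : S ⊆ F) (hF : (F.card : ℝ) ≤ M) : S.Finite ∧ (S.ncard : ℝ) ≤ M := by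
  have hcard : S.ncard ≤ F.card :=
    (Set.ncard_le_ncard hS F.finite_toSet).trans_eq (Set.ncard_coe_finset F)
  exact ⟨F.finite_toSet.subset hS, (Nat.cast_le.mpr hcard).trans hF⟩

theorem pow_le_rpow_of_natCast_le {T y : ℝ} (hT : 1 ≤ T) {k : ℕ} (hk : (k : ℝ) ≤ y) :
    T ^ k ≤ T ^ y := by
  rw [← Real.rpow_natCast]
  exact Real.rpow_le_rpow_of_exponent_le hT hk

section NearestInteger

theorem abs_sub_nearInt_le (y : ℝ) : |y - nearInt y| ≤ 1 / 2 := by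
  have hlower := Int.le_ceil (y - 1 / 2)
  have hupper := Int.ceil_lt_add_one (y - 1 / 2)
  rw [nearInt, abs_le]
  constructor <;> linarith

theorem distNearestInt_le (y : ℝ) : distNearestInt y ≤ 1 / 2 := abs_sub_round y

theorem abs_sub_nearInt (y : ℝ) : |y - nearInt y| = distNearestInt y := by
  refine le_antisymm ?_ (round_le y _)
  by_cases heq : nearInt y = round y
  · rw [heq, distNearestInt]
  · have hgap : (1 : ℝ) ≤ |(nearInt y : ℝ) - round y| := by
      exact_mod_cast Int.one_le_abs (sub_ne_zero.mpr heq)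
    have htriangle := abs_sub_le (nearInt y : ℝ) y (round y)
    rw [abs_sub_comm (nearInt y : ℝ) y] at htriangle
    rw [distNearestInt]
    linarith [abs_sub_nearInt_le y]

theorem nearInt_mem_Icc {a b y : ℝ} (hy : y ∈ Set.Icc a b) :
    nearInt y ∈ Finset.Icc ⌈a - 1 / 2⌉ ⌊b + 1 / 2⌋ := by
  have hround := abs_le.mp (abs_sub_nearInt_le y)
  rw [Finset.mem_Icc, Int.ceil_le, Int.le_floor]
  constructor <;> linarith [hy.1, hy.2]

theorem round_eq_of_abs_sub_lt {y : ℝ} {z : ℤ} (h : |y - z| < 1 / 2) : round y = z := by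
  rw [abs_lt] at h
  rw [round_eq_iff]
  constructor <;> linarith

variable {θ : ℝ}

theorem abs_mul_nearInt_sub_nearInt_le (hθ : 0 ≤ θ) (y : ℝ) :
    |θ * nearInt y - nearInt (θ * y)| ≤ θ * distNearestInt y + distNearestInt (θ * y) := by
  calc |θ * nearInt y - nearInt (θ * y)|
      ≤ |θ * nearInt y - θ * y| + |θ * y - nearInt (θ * y)| := abs_sub_le _ _ _
    _ = θ * |y - nearInt y| + |θ * y - nearInt (θ * y)| := by
        rw [← mul_sub, abs_mul, abs_of_nonneg hθ, abs_sub_comm]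
    _ = θ * distNearestInt y + distNearestInt (θ * y) := by
        rw [abs_sub_nearInt, abs_sub_nearInt]

theorem nearInt_mul_mem_Icc (hθ : 0 ≤ θ) (y : ℝ) :
    nearInt (θ * y) ∈
      Finset.Icc ⌈θ * nearInt y - (θ + 1) / 2⌉ ⌊θ * nearInt y + (θ + 1) / 2⌋ := by
  have hstep := abs_le.mp (abs_mul_nearInt_sub_nearInt_le hθ y)
  have hdist : θ * distNearestInt y ≤ θ * (1 / 2) :=
    mul_le_mul_of_nonneg_left (distNearestInt_le y) hθ
  have hdist' := distNearestInt_le (θ * y)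
  rw [Finset.mem_Icc, Int.ceil_le, Int.le_floor]
  constructor <;> linarith

theorem round_mul_nearInt (hθ : 0 ≤ θ) {y : ℝ} (hy : distNearestInt y < 1 / (2 * (1 + θ)))
    (hθy : distNearestInt (θ * y) < 1 / (2 * (1 + θ))) :
    round (θ * nearInt y) = nearInt (θ * y) := by
  apply round_eq_of_abs_sub_lt
  calc |θ * nearInt y - nearInt (θ * y)|
      ≤ θ * distNearestInt y + distNearestInt (θ * y) := abs_mul_nearInt_sub_nearInt_le hθ y
    _ < θ * (1 / (2 * (1 + θ))) + 1 / (2 * (1 + θ)) :=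
        add_lt_add_of_le_of_lt (mul_le_mul_of_nonneg_left hy.le hθ) hθy
    _ = 1 / 2 := by
        field_simp
        ring

end NearestInteger

section ReachableIntegers

/-- The possible values of `nearInt (u k)` for a sequence with `u (i + 1) = θ * u i` and
`u 0 ∈ [a, b]`, when `D` contains every step `i → i + 1` (labelled by its source `i`) across which
`nearInt (u i)` need not determine `nearInt (u (i + 1))`. -/
noncomputable def reachableInts (θ a b : ℝ) (D : Finset ℕ) : ℕ → Finset ℤ
  | 0 => Finset.Icc ⌈a - 1 / 2⌉ ⌊b + 1 / 2⌋
  | k + 1 =>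
    if k ∈ D then
      (reachableInts θ a b D k).biUnion fun r =>
        Finset.Icc ⌈θ * r - (θ + 1) / 2⌉ ⌊θ * r + (θ + 1) / 2⌋
    else (reachableInts θ a b D k).image fun r : ℤ => round (θ * r)

variable {θ a b : ℝ} {D : Finset ℕ}

theorem nearInt_mem_reachableInts (hθ : 0 ≤ θ) {u : ℕ → ℝ}
    (hu : ∀ k, u (k + 1) = θ * u k) (h₀ : u 0 ∈ Set.Icc a b) {n : ℕ}
    (hgood : ∀ k < n, k ∉ D → distNearestInt (u k) < 1 / (2 * (1 + θ)) ∧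
      distNearestInt (u (k + 1)) < 1 / (2 * (1 + θ))) :
    nearInt (u n) ∈ reachableInts θ a b D n := by
  induction n with
  | zero => exact nearInt_mem_Icc h₀
  | succ k ih =>
    have hprev := ih fun i hi => hgood i (hi.trans k.lt_succ_self)
    rw [reachableInts]
    split_ifs with hk
    · rw [hu]
      exact Finset.mem_biUnion.mpr ⟨_, hprev, nearInt_mul_mem_Icc hθ (u k)⟩
    · obtain ⟨hsource, htarget⟩ := hgood k k.lt_succ_self hk
      rw [hu] at htarget ⊢
      exact Finset.mem_image.mpr ⟨_, hprev, round_mul_nearInt hθ hsource htarget⟩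

theorem card_reachableInts_le_pow_card_filter (θ a b : ℝ) (D : Finset ℕ) (k : ℕ) :
    (reachableInts θ a b D k).card ≤
      (⌊b - a + 1⌋₊ + 1) * (⌊θ + 1⌋₊ + 1) ^ ((Finset.range k).filter (· ∈ D)).card := by
  induction k with
  | zero =>
    have hcard := card_Icc_ceil_floor_le (a - 1 / 2) (b + 1 / 2)
    rw [show b + 1 / 2 - (a - 1 / 2) = b - a + 1 by ring] at hcard
    simpa [reachableInts] using hcard
  | succ k ih =>
    rw [reachableInts, Finset.range_add_one, Finset.filter_insert]
    split_ifs with hk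
    · have hcard (r : ℤ) :
          (Finset.Icc ⌈θ * r - (θ + 1) / 2⌉ ⌊θ * r + (θ + 1) / 2⌋).card ≤ ⌊θ + 1⌋₊ + 1 := by
        convert card_Icc_ceil_floor_le (θ * r - (θ + 1) / 2) (θ * r + (θ + 1) / 2) using 3
        ring
      rw [Finset.card_insert_of_notMem (by simp), pow_succ, ← mul_assoc]
      exact (Finset.card_biUnion_le_card_mul _ _ _ fun r _ => hcard r).trans
        (Nat.mul_le_mul_right _ ih)
    · exact Finset.card_image_le.trans ih

theorem card_reachableInts_le (θ a b : ℝ) (D : Finset ℕ) (k : ℕ) :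
    (reachableInts θ a b D k).card ≤ (⌊b - a + 1⌋₊ + 1) * (⌊θ + 1⌋₊ + 1) ^ D.card := by
  have hsub : (Finset.range k).filter (· ∈ D) ⊆ D := fun i hi => (Finset.mem_filter.mp hi).2
  refine (card_reachableInts_le_pow_card_filter θ a b D k).trans ?_
  gcongr
  exact Nat.le_add_left 1 _

end ReachableIntegers

section BadIndices

/-- The steps having an endpoint in `B`, where step `i` leads from index `i + 1` to index `i + 2`.
Truncated subtraction can only add the step `0`. -/
def stepsMeeting (B : Finset ℕ) : Finset ℕ := B.image (· - 1) ∪ B.image (· - 2)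

theorem card_stepsMeeting_le (B : Finset ℕ) : (stepsMeeting B).card ≤ 2 * B.card := by
  rw [two_mul]
  exact (Finset.card_union_le _ _).trans (add_le_add Finset.card_image_le Finset.card_image_le)

theorem notMem_of_notMem_stepsMeeting {B : Finset ℕ} {i : ℕ} (hi : i ∉ stepsMeeting B) :
    i + 1 ∉ B ∧ i + 2 ∉ B := by
  rw [stepsMeeting, Finset.mem_union, not_or] at hi
  exact ⟨fun h => hi.1 (Finset.mem_image.mpr ⟨i + 1, h, rfl⟩),
    fun h => hi.2 (Finset.mem_image.mpr ⟨i + 2, h, rfl⟩)⟩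

/-- The indices `1 ≤ k ≤ N` at which `c₀ θ ^ k x` is not within `1 / (2 (1 + θ))` of an integer. -/
noncomputable def badIndices (c₀ θ : ℝ) (N : ℕ) (x : ℝ) : Finset ℕ :=
  (Finset.Icc 1 N).filter fun k => ¬ distNearestInt (c₀ * θ ^ k * x) < 1 / (2 * (1 + θ))

/-- Candidates for `nearInt (c₀ * θ ^ (n + 1) * x)` with `x ∈ [H₁, H₂]` and at most `m` bad indices
up to `n + 1`. The bad indices are enlarged to a set with exactly `m` elements. -/
noncomputable def candidateInts (c₀ θ H₁ H₂ : ℝ) (n m : ℕ) : Finset ℤ :=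
  (Finset.powersetCard m (Finset.Icc 1 (n + 1))).biUnion fun B =>
    reachableInts θ (c₀ * θ * H₁) (c₀ * θ * H₂) (stepsMeeting B) n

variable {c₀ θ H₁ H₂ ε x : ℝ} {N n m : ℕ}

theorem card_badIndices_lt
    (h : (1 - ε) * N < (((Finset.Icc 1 N).filter fun k =>
      distNearestInt (c₀ * θ ^ k * x) < 1 / (2 * (1 + θ))).card : ℝ)) :
    ((badIndices c₀ θ N x).card : ℝ) < ε * N := by
  have hsplit := Finset.card_filter_add_card_filter_not (s := Finset.Icc 1 N)
    fun k => distNearestInt (c₀ * θ ^ k * x) < 1 / (2 * (1 + θ))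
  rw [Nat.card_Icc, Nat.add_sub_cancel, ← badIndices] at hsplit
  have hsplit' : (((Finset.Icc 1 N).filter fun k =>
      distNearestInt (c₀ * θ ^ k * x) < 1 / (2 * (1 + θ))).card : ℝ) +
      (badIndices c₀ θ N x).card = N := by
    exact_mod_cast hsplit
  linarith

theorem card_badIndices_le (c₀ θ : ℝ) (N : ℕ) (x : ℝ) : (badIndices c₀ θ N x).card ≤ N :=
  (Finset.card_filter_le _ _).trans_eq (Nat.card_Icc 1 N)

theorem nearInt_mem_reachableInts_of_badIndices_subset (hc₀ : 0 ≤ c₀) (hθ : 0 ≤ θ)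
    (hx : x ∈ Set.Icc H₁ H₂) {B : Finset ℕ} (hB : badIndices c₀ θ (n + 1) x ⊆ B) :
    nearInt (c₀ * θ ^ (n + 1) * x) ∈
      reachableInts θ (c₀ * θ * H₁) (c₀ * θ * H₂) (stepsMeeting B) n := by
  have hgood (i : ℕ) (hi : i ∈ Finset.Icc 1 (n + 1)) (hiB : i ∉ B) :
      distNearestInt (c₀ * θ ^ i * x) < 1 / (2 * (1 + θ)) := by
    by_contra hbad
    exact hiB (hB (Finset.mem_filter.mpr ⟨hi, hbad⟩))
  have hnonneg : 0 ≤ c₀ * θ := mul_nonneg hc₀ hθ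
  refine nearInt_mem_reachableInts (u := fun i => c₀ * θ ^ (i + 1) * x) hθ
    (fun i => by ring) ?_ fun i hi hiD => ?_
  · rw [zero_add, pow_one]
    exact ⟨mul_le_mul_of_nonneg_left hx.1 hnonneg, mul_le_mul_of_nonneg_left hx.2 hnonneg⟩
  · obtain ⟨hsource, htarget⟩ := notMem_of_notMem_stepsMeeting hiD
    exact ⟨hgood _ (Finset.mem_Icc.mpr (by omega)) hsource,
      hgood _ (Finset.mem_Icc.mpr (by omega)) htarget⟩

theorem nearInt_mem_candidateInts (hc₀ : 0 ≤ c₀) (hθ : 0 ≤ θ) (hx : x ∈ Set.Icc H₁ H₂)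
    (hcard : (badIndices c₀ θ (n + 1) x).card ≤ m) (hm : m ≤ n + 1) :
    nearInt (c₀ * θ ^ (n + 1) * x) ∈ candidateInts c₀ θ H₁ H₂ n m := by
  obtain ⟨B, hbad, hB, hBm⟩ := Finset.exists_subsuperset_card_eq
    (Finset.filter_subset _ _ : badIndices c₀ θ (n + 1) x ⊆ Finset.Icc 1 (n + 1)) hcard
    (by simpa using hm)
  exact Finset.mem_biUnion.mpr ⟨B, Finset.mem_powersetCard.mpr ⟨hB, hBm⟩,
    nearInt_mem_reachableInts_of_badIndices_subset hc₀ hθ hx hbad⟩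

theorem card_candidateInts_le (c₀ θ H₁ H₂ : ℝ) (n m : ℕ) :
    (candidateInts c₀ θ H₁ H₂ n m).card ≤
      (n + 1).choose m *
        ((⌊c₀ * θ * (H₂ - H₁) + 1⌋₊ + 1) * (⌊θ + 1⌋₊ + 1) ^ (2 * m)) := by
  have hcard := Finset.card_biUnion_le_card_mul
    (Finset.powersetCard m (Finset.Icc 1 (n + 1)))
    (fun B => reachableInts θ (c₀ * θ * H₁) (c₀ * θ * H₂) (stepsMeeting B) n)
    ((⌊c₀ * θ * (H₂ - H₁) + 1⌋₊ + 1) * (⌊θ + 1⌋₊ + 1) ^ (2 * m)) fun B hB => ?_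
  · simpa [candidateInts] using hcard
  · have hsteps : (stepsMeeting B).card ≤ 2 * m :=
      (Finset.mem_powersetCard.mp hB).2 ▸ card_stepsMeeting_le B
    refine (card_reachableInts_le _ _ _ _ n).trans ?_
    rw [← mul_sub]
    gcongr
    exact Nat.le_add_left 1 _

theorem card_candidateInts_le_sum_choose (hL : 0 ≤ c₀ * θ * (H₂ - H₁)) (hθ : 0 ≤ θ) (n m : ℕ) :
    ((candidateInts c₀ θ H₁ H₂ n m).card : ℝ) ≤
      (∑ j ∈ Finset.range (m + 2), ((n + 1).choose j : ℝ)) * (θ + 2) ^ (2 * m) *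
        (c₀ * θ * (H₂ - H₁) + 1) := by
  set L := c₀ * θ * (H₂ - H₁)
  have hinitial : (⌊L + 1⌋₊ : ℝ) + 1 ≤ 2 * (L + 1) := by
    linarith [Nat.floor_le (add_nonneg hL zero_le_one)]
  have hbranch : (⌊θ + 1⌋₊ : ℝ) + 1 ≤ θ + 2 := by
    linarith [Nat.floor_le (add_nonneg hθ zero_le_one)]
  have hchoose : 2 * ((n + 1).choose m : ℝ) ≤
      ∑ j ∈ Finset.range (m + 2), ((n + 1).choose j : ℝ) := by
    exact_mod_cast two_mul_choose_le_sum_range n.succ_ne_zero m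
  calc ((candidateInts c₀ θ H₁ H₂ n m).card : ℝ)
      ≤ (n + 1).choose m * (((⌊L + 1⌋₊ : ℝ) + 1) * ((⌊θ + 1⌋₊ : ℝ) + 1) ^ (2 * m)) := by
        exact_mod_cast card_candidateInts_le c₀ θ H₁ H₂ n m
    _ ≤ (n + 1).choose m * (2 * (L + 1) * (θ + 2) ^ (2 * m)) := by gcongr
    _ = 2 * (n + 1).choose m * (θ + 2) ^ (2 * m) * (L + 1) := by ring
    _ ≤ _ := by gcongr

end BadIndices

theorem stmt9_general {c₀ θ H₁ H₂ : ℝ} (hc₀ : 0 ≤ c₀) (hθ : 0 ≤ θ) (hH : H₁ ≤ H₂) (ε : ℝ)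
    (N : ℕ) :
    {z : ℤ | ∃ x ∈ Set.Icc H₁ H₂,
        (1 - ε) * N <
          (((Finset.Icc 1 N).filter fun k =>
              distNearestInt (c₀ * θ ^ k * x) < 1 / (2 * (1 + θ))).card : ℝ) ∧
        nearInt (c₀ * θ ^ N * x) = z}.Finite ∧
    ({z : ℤ | ∃ x ∈ Set.Icc H₁ H₂,
        (1 - ε) * N <
          (((Finset.Icc 1 N).filter fun k =>
              distNearestInt (c₀ * θ ^ k * x) < 1 / (2 * (1 + θ))).card : ℝ) ∧
        nearInt (c₀ * θ ^ N * x) = z}.ncard : ℝ) ≤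
      (∑ j ∈ Finset.range (⌊ε * N⌋₊ + 2), (N.choose j : ℝ)) *
        (θ + 2) ^ (2 * ε * (N : ℝ)) * (c₀ * θ * (H₂ - H₁) + 1) := by
  have hL : 0 ≤ c₀ * θ * (H₂ - H₁) := mul_nonneg (mul_nonneg hc₀ hθ) (sub_nonneg.mpr hH)
  rcases le_or_gt (ε * N) 0 with hεN | hεN
  · apply finite_and_ncard_le_of_subset (F := ∅)
    · rintro _ ⟨x, -, hgood, rfl⟩
      exact absurd (card_badIndices_lt hgood) (hεN.trans (Nat.cast_nonneg _)).not_gt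
    · rw [Finset.card_empty, Nat.cast_zero]
      positivity
  obtain ⟨n, rfl⟩ : ∃ n, N = n + 1 :=
    Nat.exists_eq_add_one_of_ne_zero (by rintro rfl; simp at hεN)
  set m := min ⌊ε * (n + 1 : ℕ)⌋₊ (n + 1)
  have hm : (m : ℝ) ≤ ε * (n + 1 : ℕ) :=
    (Nat.cast_le.mpr (min_le_left _ _)).trans (Nat.floor_le hεN.le)
  have hpow : (θ + 2) ^ (2 * m) ≤ (θ + 2) ^ (2 * ε * (n + 1 : ℕ)) := by
    apply pow_le_rpow_of_natCast_le (by linarith)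
    push_cast at hm ⊢
    linarith
  apply finite_and_ncard_le_of_subset (F := candidateInts c₀ θ H₁ H₂ n m)
  · rintro _ ⟨x, hx, hgood, rfl⟩
    exact nearInt_mem_candidateInts hc₀ hθ hx
      (le_min (Nat.le_floor (card_badIndices_lt hgood).le) (card_badIndices_le c₀ θ _ x))
      (min_le_right _ _)
  · refine (card_candidateInts_le_sum_choose hL hθ n m).trans ?_
    gcongr
    exact min_le_left _ _

/-- the number of distinct integers `r_N(x) = nearInt (c₀ θ^N x)` with
`x ∈ Γ_N(ε)` is at most `(Σ_{j=0}^{⌊εN⌋+1} C(N,j)) · (θ+2)^{2εN} · (c₀ θ (H₂-H₁) + 1)`. -/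
theorem stmt9
    (c₀ : ℝ) (hc₀ : 0 < c₀) (θ : ℝ) (hθ : 1 < θ) (H₁ H₂ : ℝ) (hH : H₁ ≤ H₂)
    (ε : ℝ) (hε : ε ∈ Set.Ioo (0 : ℝ) (1 / 2)) (N : ℕ) :
    (setOf fun z : ℤ => ∃ x ∈ Set.Icc H₁ H₂,
        (1 - ε) * N <
          (((Finset.Icc 1 N).filter fun k =>
              distNearestInt (c₀ * θ ^ k * x) < 1 / (2 * (1 + θ))).card : ℝ) ∧
        nearInt (c₀ * θ ^ N * x) = z).Finite ∧
    ((setOf fun z : ℤ => ∃ x ∈ Set.Icc H₁ H₂,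
        (1 - ε) * N <
          (((Finset.Icc 1 N).filter fun k =>
              distNearestInt (c₀ * θ ^ k * x) < 1 / (2 * (1 + θ))).card : ℝ) ∧
        nearInt (c₀ * θ ^ N * x) = z).ncard : ℝ) ≤
      (∑ j ∈ Finset.range (⌊ε * N⌋₊ + 2), (N.choose j : ℝ)) *
        (θ + 2) ^ (2 * ε * (N : ℝ)) * (c₀ * θ * (H₂ - H₁) + 1) :=
  stmt9_general hc₀.le (zero_le_one.trans hθ.le) hH ε N
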